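/- Let (H,η) be an extended strip decomposition of a graph G. Suppose P1, P2, P3 are three induced paths in G that are pairwise vertex-disjoint and pairwise non-adjacent, and each of P1, P2, P3 has an endpoint that is peripheral in (H,η). Then for every vertex u of H, at most one of the paths P1, P2, P3 intersects the set η(u) ∪ ⋃_{w : uw ∈ E(H)} η(uw, u). -/

import Mathlib

noncomputable section

namespace Paper

/-- The closed neighborhood `N[X]` of a set `X` of vertices. -/
def closedNbhd {V : Type} (G : SimpleGraph V) (X : Set V) : Set V :=
  {v | v ∈ X ∨ ∃ x ∈ X, G.Adj x v}

/-- The total weight `w(X)` of a set of vertices. -/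
def wsum {V : Type} (w : V → ℕ) (X : Set V) : ℕ := ∑ᶠ x ∈ X, w x

/-- `p : Fin m → V` is an induced path in `G` (on `m` vertices). -/
def InducedPathFun {V : Type} (G : SimpleGraph V) {m : ℕ} (p : Fin m → V) : Prop :=
  Function.Injective p ∧
    ∀ i j : Fin m, G.Adj (p i) (p j) ↔ ((i : ℕ) + 1 = (j : ℕ) ∨ (j : ℕ) + 1 = (i : ℕ))

/-- The vertex sets `A` and `B` are non-adjacent in `G`. -/
def NonAdj {V : Type} (G : SimpleGraph V) (A B : Set V) : Prop :=
  ∀ x ∈ A, ∀ y ∈ B, ¬ G.Adj x y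

/-- `A` intersects or is adjacent to `B` in `G`. -/
def Touches {V : Type} (G : SimpleGraph V) (A B : Set V) : Prop :=
  ∃ x ∈ A, ∃ y ∈ B, x = y ∨ G.Adj x y

/-- `T` is (the vertex set of) a triangle in `H`. -/
def IsTriangle {W : Type} (H : SimpleGraph W) (T : Set W) : Prop :=
  ∃ u v x, H.Adj u v ∧ H.Adj u x ∧ H.Adj v x ∧ T = {u, v, x}

/-- An extended strip decomposition of the graph `G`, with pattern graph `H`.
`vmap u` is `η(u)` for a vertex `u` of `H`, `emap e` is `η(e)` for an edge `e` of `H`,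
`endmap u v` is `η(uv, u)` for an edge `uv` of `H` (with distinguished endpoint `u`),
and `tmap T` is `η(T)` for a triangle `T` of `H`.  (The values of `emap`, `endmap`, `tmap`
on non-edges/non-triangles are irrelevant.) -/
structure ESD {V W : Type} (G : SimpleGraph V) (H : SimpleGraph W) where
  vmap : W → Set V
  emap : Sym2 W → Set V
  endmap : W → W → Set V
  tmap : Set W → Set V
  endmap_subset : ∀ u v, H.Adj u v → endmap u v ⊆ emap s(u, v)
  cover : ∀ x : V, (∃ u, x ∈ vmap u) ∨ (∃ e ∈ H.edgeSet, x ∈ emap e) ∨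
    (∃ T, IsTriangle H T ∧ x ∈ tmap T)
  disj_vv : ∀ u u', u ≠ u' → Disjoint (vmap u) (vmap u')
  disj_ee : ∀ e e', e ∈ H.edgeSet → e' ∈ H.edgeSet → e ≠ e' → Disjoint (emap e) (emap e')
  disj_tt : ∀ T T', IsTriangle H T → IsTriangle H T' → T ≠ T' → Disjoint (tmap T) (tmap T')
  disj_ve : ∀ u e, e ∈ H.edgeSet → Disjoint (vmap u) (emap e)
  disj_vt : ∀ u T, IsTriangle H T → Disjoint (vmap u) (tmap T)
  disj_et : ∀ e T, e ∈ H.edgeSet → IsTriangle H T → Disjoint (emap e) (tmap T)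
  fully_adj : ∀ v u u', H.Adj v u → H.Adj v u' → u ≠ u' →
    ∀ x ∈ endmap v u, ∀ y ∈ endmap v u', G.Adj x y
  edge_cond : ∀ x y, G.Adj x y →
    (∃ u, x ∈ vmap u ∧ y ∈ vmap u) ∨
    (∃ e ∈ H.edgeSet, x ∈ emap e ∧ y ∈ emap e) ∨
    (∃ T, IsTriangle H T ∧ x ∈ tmap T ∧ y ∈ tmap T) ∨
    (∃ v u u', H.Adj v u ∧ H.Adj v u' ∧ u ≠ u' ∧ x ∈ endmap v u ∧ y ∈ endmap v u') ∨
    (∃ v u, H.Adj v u ∧ ((x ∈ vmap v ∧ y ∈ endmap v u) ∨ (y ∈ vmap v ∧ x ∈ endmap v u))) ∨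
    (∃ T u u', IsTriangle H T ∧ u ∈ T ∧ u' ∈ T ∧ H.Adj u u' ∧
      ((x ∈ tmap T ∧ y ∈ endmap u u' ∩ endmap u' u) ∨
       (y ∈ tmap T ∧ x ∈ endmap u u' ∩ endmap u' u)))

/-- Names (labels) for the atoms of an extended strip decomposition with pattern graph on `W`:
`bot e = A_e^⊥`, `half u v = A_{uv}^u`, `full e = A_e^{uv}` for an edge `e = uv`,
`vert u = A_u` for a vertex `u`, and `tri T = A_T` for a triangle `T`. -/
inductive AtomLabel (W : Type) where
  | bot : Sym2 W → AtomLabel W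
  | half : W → W → AtomLabel W
  | full : Sym2 W → AtomLabel W
  | vert : W → AtomLabel W
  | tri : Set W → AtomLabel W

/-- An atom label is valid if the underlying feature is really an edge / a triangle of `H`. -/
def ValidAtom {W : Type} (H : SimpleGraph W) : AtomLabel W → Prop
  | .bot e => e ∈ H.edgeSet
  | .half u v => H.Adj u v
  | .full e => e ∈ H.edgeSet
  | .vert _ => True
  | .tri T => IsTriangle H T

/-- The vertex set of `G` corresponding to an atom label. -/
def ESD.atomSet {V W : Type} {G : SimpleGraph V} {H : SimpleGraph W} (D : ESD G H) :
    AtomLabel W → Set V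
  | .bot e => D.emap e \
      Sym2.lift ⟨fun u v => D.endmap u v ∪ D.endmap v u, fun _ _ => Set.union_comm _ _⟩ e
  | .half u v => D.vmap u ∪ (D.emap s(u, v) \ D.endmap v u)
  | .full e =>
      Sym2.lift ⟨fun u v => D.vmap u ∪ D.vmap v, fun _ _ => Set.union_comm _ _⟩ e ∪
        D.emap e ∪ ⋃ T ∈ {T : Set W | IsTriangle H T ∧ ∀ x ∈ e, x ∈ T}, D.tmap T
  | .vert u => D.vmap u
  | .tri T => D.tmap T

/-- The four atoms associated with the edge `uv` of `H`. -/
def Quad {W : Type} (u v : W) : Set (AtomLabel W) :=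
  {AtomLabel.bot s(u, v), AtomLabel.half u v, AtomLabel.half v u, AtomLabel.full s(u, v)}

/-- Two atom labels are conflicting. -/
def Conflict {W : Type} (H : SimpleGraph W) (a b : AtomLabel W) : Prop :=
  (∃ u v, H.Adj u v ∧ a ≠ b ∧ a ∈ Quad u v ∧ b ∈ Quad u v) ∨
  (∃ u v, H.Adj u v ∧
    (((a = AtomLabel.half u v ∨ a = AtomLabel.full s(u, v)) ∧ b = AtomLabel.vert u) ∨
     ((b = AtomLabel.half u v ∨ b = AtomLabel.full s(u, v)) ∧ a = AtomLabel.vert u))) ∨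
  (∃ u v v', H.Adj u v ∧ H.Adj u v' ∧ v ≠ v' ∧
    (a = AtomLabel.half u v ∨ a = AtomLabel.full s(u, v)) ∧
    (b = AtomLabel.half u v' ∨ b = AtomLabel.full s(u, v'))) ∨
  (∃ u v T, H.Adj u v ∧ IsTriangle H T ∧ u ∈ T ∧ v ∈ T ∧
    ((a = AtomLabel.full s(u, v) ∧ b = AtomLabel.tri T) ∨
     (b = AtomLabel.full s(u, v) ∧ a = AtomLabel.tri T)))

/-- A family of atoms is independent if its members are pairwise non-conflicting. -/
def IndepFamily {W : Type} (H : SimpleGraph W) (𝒜 : Set (AtomLabel W)) : Prop :=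
  ∀ a ∈ 𝒜, ∀ b ∈ 𝒜, ¬ Conflict H a b

/-- The vertex `z` of `G` is peripheral in the extended strip decomposition `D`. -/
def Peripheral {V W : Type} {G : SimpleGraph V} {H : SimpleGraph W} (D : ESD G H)
    (z : V) : Prop :=
  ∃ wz u, H.Adj wz u ∧ (∀ u', H.Adj wz u' → u' = u) ∧ D.endmap wz u = {z}
/-- The set `K_u = η(u) ∪ ⋃_{w : uw ∈ E(H)} η(uw, u)` for a vertex `u` of `H`. -/
def Kset {V W : Type} {G : SimpleGraph V} (H : SimpleGraph W) (D : ESD G H) (u : W) :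
    Set V :=
  D.vmap u ∪ ⋃ v ∈ {v : W | H.Adj u v}, D.endmap u v

/-!
Let `S` and `S'` be connected vertex sets, disjoint and non-adjacent, each containing a peripheral
vertex and meeting `K_u`. As `η(uw,u)` and `η(uw',u)` are complete to each other for `w ≠ w'`, there
is a single `w` such that `η(uw,u)` meets `S` and `S'`, and neither set meets another end at `u`.
A connected set leaving the atom `A_{uw}^u` without using another end at `u` does so through
`η(uw,w)`, and a peripheral vertex in `η(uw)` must be the only vertex of `η(uw,w)`, since `η(uw,u)`
meets both sets; either way `S` and `S'` meet `η(uw,w)`. Now if the peripheral vertex of `S` is in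
`η(uw)`, then `S'` contains it, a contradiction. Otherwise `S` leaves the atom `A_{uw}^{uw}` through
another end `η(wb,w)` at `w`, which is complete to `η(uw,w)` and hence adjacent to `S'`.
-/

theorem exists_adj_mem_notMem_of_preconnected_induce {V : Type*} {G : SimpleGraph V} {S X : Set V}
    (hS : (G.induce S).Preconnected) (hmem : (S ∩ X).Nonempty) (hnotMem : (S \ X).Nonempty) :
    ∃ x ∈ S ∩ X, ∃ y ∈ S \ X, G.Adj x y := by
  obtain ⟨a, haS, haX⟩ := hmem
  obtain ⟨b, hbS, hbX⟩ := hnotMem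
  obtain ⟨walk⟩ := hS ⟨a, haS⟩ ⟨b, hbS⟩
  obtain ⟨d, -, hfst, hsnd⟩ := walk.exists_boundary_dart (Subtype.val ⁻¹' X) haX hbX
  exact ⟨d.fst, ⟨d.fst.2, hfst⟩, d.snd, ⟨d.snd.2, hsnd⟩, d.adj⟩

section

variable {V W : Type} {G : SimpleGraph V} {H : SimpleGraph W}

theorem InducedPathFun.preconnected_induce_range {m : ℕ} {p : Fin m → V}
    (hp : InducedPathFun G p) : (G.induce (Set.range p)).Preconnected :=
  (SimpleGraph.pathGraph_preconnected m).map
    ⟨Set.rangeFactorization p, fun hadj => (hp.2 _ _).2 (SimpleGraph.pathGraph_adj.1 hadj)⟩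
    Set.rangeFactorization_surjective

theorem IsTriangle.mem_or_mem_of_subset {T : Set W} (hT : IsTriangle H T) {e : Sym2 W}
    (he : ¬ e.IsDiag) (heT : ∀ v ∈ e, v ∈ T) {a b : W} (ha : a ∈ T) (hb : b ∈ T) (hab : a ≠ b) :
    a ∈ e ∨ b ∈ e := by
  obtain ⟨t₁, t₂, t₃, -, -, -, rfl⟩ := hT
  induction e with | _ u w
  simp only [Sym2.mem_iff, Sym2.mk_isDiag_iff, Set.mem_insert_iff, Set.mem_singleton_iff,
    forall_eq_or_imp, forall_eq] at *
  grind

namespace ESD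

variable (D : ESD G H) {x y z : V} {u v w : W} {e e' : Sym2 W} {T T' : Set W} {S S' : Set V}

theorem eq_of_mem_vmap (hx : x ∈ D.vmap u) (hx' : x ∈ D.vmap v) : u = v := by
  by_contra hne
  exact (D.disj_vv u v hne).notMem_of_mem_left hx hx'

theorem eq_of_mem_emap (he : e ∈ H.edgeSet) (he' : e' ∈ H.edgeSet) (hx : x ∈ D.emap e)
    (hx' : x ∈ D.emap e') : e = e' := by
  by_contra hne
  exact (D.disj_ee e e' he he' hne).notMem_of_mem_left hx hx'

theorem eq_of_mem_tmap (hT : IsTriangle H T) (hT' : IsTriangle H T') (hx : x ∈ D.tmap T)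
    (hx' : x ∈ D.tmap T') : T = T' := by
  by_contra hne
  exact (D.disj_tt T T' hT hT' hne).notMem_of_mem_left hx hx'

theorem mem_Kset_iff : x ∈ Kset H D u ↔ x ∈ D.vmap u ∨ ∃ w, H.Adj u w ∧ x ∈ D.endmap u w := by
  simp [Kset]

theorem mem_Kset_of_mem_vmap (hx : x ∈ D.vmap u) : x ∈ Kset H D u :=
  D.mem_Kset_iff.2 (Or.inl hx)

theorem mem_Kset_of_mem_endmap (huw : H.Adj u w) (hx : x ∈ D.endmap u w) : x ∈ Kset H D u :=
  D.mem_Kset_iff.2 (Or.inr ⟨w, huw, hx⟩)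

theorem eq_of_mem_vmap_of_mem_Kset (hx : x ∈ D.vmap u) (hxK : x ∈ Kset H D v) : u = v := by
  rcases D.mem_Kset_iff.1 hxK with hxv | ⟨w, hvw, hxw⟩
  · exact D.eq_of_mem_vmap hx hxv
  · exact ((D.disj_ve u _ hvw).notMem_of_mem_left hx (D.endmap_subset v w hvw hxw)).elim

theorem exists_endmap_of_mem_emap_of_mem_Kset (he : e ∈ H.edgeSet) (hx : x ∈ D.emap e)
    (hxK : x ∈ Kset H D v) : ∃ w, e = s(v, w) ∧ x ∈ D.endmap v w := by
  rcases D.mem_Kset_iff.1 hxK with hxv | ⟨w, hvw, hxw⟩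
  · exact ((D.disj_ve v e he).notMem_of_mem_left hxv hx).elim
  · exact ⟨w, D.eq_of_mem_emap he hvw hx (D.endmap_subset v w hvw hxw), hxw⟩

theorem notMem_Kset_of_mem_tmap (hT : IsTriangle H T) (hx : x ∈ D.tmap T) : x ∉ Kset H D v := by
  intro hxK
  rcases D.mem_Kset_iff.1 hxK with hxv | ⟨w, hvw, hxw⟩
  · exact (D.disj_vt v T hT).notMem_of_mem_left hxv hx
  · exact (D.disj_et _ T hvw hT).notMem_of_mem_left (D.endmap_subset v w hvw hxw) hx

theorem adj_cases (hxy : G.Adj x y) :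
    (∃ v, x ∈ Kset H D v ∧ y ∈ Kset H D v) ∨
    (∃ e ∈ H.edgeSet, x ∈ D.emap e ∧ y ∈ D.emap e) ∨
    (∃ T, IsTriangle H T ∧ x ∈ D.tmap T ∧ y ∈ D.tmap T) ∨
    (∃ T a b, IsTriangle H T ∧ a ∈ T ∧ b ∈ T ∧ H.Adj a b ∧
      ((x ∈ D.tmap T ∧ y ∈ D.endmap a b ∩ D.endmap b a) ∨
       (y ∈ D.tmap T ∧ x ∈ D.endmap a b ∩ D.endmap b a))) := by
  rcases D.edge_cond x y hxy with ⟨v, hx, hy⟩ | hedge | htri |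
    ⟨v, a, b, hva, hvb, -, hx, hy⟩ | ⟨v, a, hva, ⟨hx, hy⟩ | ⟨hy, hx⟩⟩ | hjoin
  · exact Or.inl ⟨v, D.mem_Kset_of_mem_vmap hx, D.mem_Kset_of_mem_vmap hy⟩
  · exact Or.inr (Or.inl hedge)
  · exact Or.inr (Or.inr (Or.inl htri))
  · exact Or.inl ⟨v, D.mem_Kset_of_mem_endmap hva hx, D.mem_Kset_of_mem_endmap hvb hy⟩
  · exact Or.inl ⟨v, D.mem_Kset_of_mem_vmap hx, D.mem_Kset_of_mem_endmap hva hy⟩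
  · exact Or.inl ⟨v, D.mem_Kset_of_mem_endmap hva hx, D.mem_Kset_of_mem_vmap hy⟩
  · exact Or.inr (Or.inr (Or.inr hjoin))

theorem mem_Kset_of_adj_of_mem_vmap (hxy : G.Adj x y) (hx : x ∈ D.vmap u) : y ∈ Kset H D u := by
  rcases D.adj_cases hxy with ⟨v, hxv, hyv⟩ | ⟨e, he, hxe, -⟩ | ⟨T, hT, hxT, -⟩ |
    ⟨T, a, b, hT, -, -, hab, ⟨hxT, -⟩ | ⟨-, hxa, -⟩⟩
  · exact D.eq_of_mem_vmap_of_mem_Kset hx hxv ▸ hyv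
  · exact ((D.disj_ve u e he).notMem_of_mem_left hx hxe).elim
  · exact ((D.disj_vt u T hT).notMem_of_mem_left hx hxT).elim
  · exact ((D.disj_vt u T hT).notMem_of_mem_left hx hxT).elim
  · exact ((D.disj_ve u _ hab).notMem_of_mem_left hx (D.endmap_subset a b hab hxa)).elim

theorem adj_cases_of_mem_tmap (hT : IsTriangle H T) (hxy : G.Adj x y) (hx : x ∈ D.tmap T) :
    y ∈ D.tmap T ∨
    ∃ a ∈ T, ∃ b ∈ T, H.Adj a b ∧ y ∈ D.endmap a b ∩ D.endmap b a := by
  rcases D.adj_cases hxy with ⟨v, hxv, -⟩ | ⟨e, he, hxe, -⟩ | ⟨T', hT', hxT', hyT'⟩ |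
    ⟨T', a, b, hT', ha, hb, hab, ⟨hxT', hy⟩ | ⟨-, hxa, -⟩⟩
  · exact (D.notMem_Kset_of_mem_tmap hT hx hxv).elim
  · exact ((D.disj_et e T he hT).notMem_of_mem_left hxe hx).elim
  · obtain rfl := D.eq_of_mem_tmap hT hT' hx hxT'
    exact Or.inl hyT'
  · obtain rfl := D.eq_of_mem_tmap hT hT' hx hxT'
    exact Or.inr ⟨a, ha, b, hb, hab, hy⟩
  · exact (D.notMem_Kset_of_mem_tmap hT hx (D.mem_Kset_of_mem_endmap hab hxa)).elim

theorem adj_cases_of_mem_emap (he : e ∈ H.edgeSet) (hxy : G.Adj x y) (hx : x ∈ D.emap e) :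
    y ∈ D.emap e ∨
    (∃ v w, e = s(v, w) ∧ x ∈ D.endmap v w ∧ y ∈ Kset H D v) ∨
    (∃ T, IsTriangle H T ∧ (∀ v ∈ e, v ∈ T) ∧ y ∈ D.tmap T ∧
      ∀ v w, e = s(v, w) → x ∈ D.endmap v w) := by
  rcases D.adj_cases hxy with ⟨v, hxv, hyv⟩ | ⟨e', he', hxe', hye'⟩ | ⟨T, hT, hxT, -⟩ |
    ⟨T, a, b, hT, ha, hb, hab, ⟨hxT, -⟩ | ⟨hyT, hxab, hxba⟩⟩
  · obtain ⟨w, rfl, hxw⟩ := D.exists_endmap_of_mem_emap_of_mem_Kset he hx hxv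
    exact Or.inr (Or.inl ⟨v, w, rfl, hxw, hyv⟩)
  · obtain rfl := D.eq_of_mem_emap he he' hx hxe'
    exact Or.inl hye'
  · exact ((D.disj_et e T he hT).notMem_of_mem_left hx hxT).elim
  · exact ((D.disj_et e T he hT).notMem_of_mem_left hx hxT).elim
  · obtain rfl := D.eq_of_mem_emap he hab hx (D.endmap_subset a b hab hxab)
    refine Or.inr (Or.inr ⟨T, hT, by simp [ha, hb], hyT, fun v w hvw => ?_⟩)
    rcases Sym2.eq_iff.1 hvw with ⟨rfl, rfl⟩ | ⟨rfl, rfl⟩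
    exacts [hxab, hxba]

theorem mem_atomSet_full_iff :
    x ∈ D.atomSet (.full e) ↔ (∃ v ∈ e, x ∈ D.vmap v) ∨ x ∈ D.emap e ∨
      ∃ T, IsTriangle H T ∧ (∀ v ∈ e, v ∈ T) ∧ x ∈ D.tmap T := by
  induction e with | _ u w
  simp [atomSet, or_assoc, and_assoc]

theorem mem_atomSet_half_iff :
    x ∈ D.atomSet (.half u w) ↔ x ∈ D.vmap u ∨ x ∈ D.emap s(u, w) ∧ x ∉ D.endmap w u :=
  Iff.rfl

theorem atomSet_half_subset_atomSet_full :
    D.atomSet (.half u w) ⊆ D.atomSet (.full s(u, w)) := by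
  rintro x (hxu | ⟨hxe, -⟩)
  · exact D.mem_atomSet_full_iff.2 (Or.inl ⟨u, Sym2.mem_mk_left u w, hxu⟩)
  · exact D.mem_atomSet_full_iff.2 (Or.inr (Or.inl hxe))

theorem notMem_atomSet_full_of_mem_emap (he' : e' ∈ H.edgeSet) (hx' : x ∈ D.emap e')
    (hx : x ∉ D.emap e) : x ∉ D.atomSet (.full e) := by
  rw [mem_atomSet_full_iff]
  rintro (⟨v, -, hxv⟩ | hxe | ⟨T, hT, -, hxT⟩)
  · exact (D.disj_ve v e' he').notMem_of_mem_left hxv hx'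
  · exact hx hxe
  · exact (D.disj_et e' T he' hT).notMem_of_mem_left hx' hxT

theorem exists_mem_Kset_of_adj_of_notMem_atomSet_full (he : e ∈ H.edgeSet) (hxy : G.Adj x y)
    (hx : x ∈ D.atomSet (.full e)) (hy : y ∉ D.atomSet (.full e)) :
    ∃ v ∈ e, y ∈ Kset H D v := by
  rw [mem_atomSet_full_iff, not_or, not_or] at hy
  obtain ⟨-, hye, hytri⟩ := hy
  rcases D.mem_atomSet_full_iff.1 hx with ⟨v, hve, hxv⟩ | hxe | ⟨T, hT, heT, hxT⟩
  · exact ⟨v, hve, D.mem_Kset_of_adj_of_mem_vmap hxy hxv⟩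
  · rcases D.adj_cases_of_mem_emap he hxy hxe with
      hye' | ⟨v, w, rfl, -, hyv⟩ | ⟨T, hT, heT, hyT, -⟩
    · exact (hye hye').elim
    · exact ⟨v, Sym2.mem_mk_left v w, hyv⟩
    · exact (hytri ⟨T, hT, heT, hyT⟩).elim
  · rcases D.adj_cases_of_mem_tmap hT hxy hxT with hyT | ⟨a, ha, b, hb, hab, hyab, hyba⟩
    · exact (hytri ⟨T, hT, heT, hyT⟩).elim
    · rcases hT.mem_or_mem_of_subset (H.not_isDiag_of_mem_edgeSet he) heT ha hb hab.ne with
        hae | hbe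
      · exact ⟨a, hae, D.mem_Kset_of_mem_endmap hab hyab⟩
      · exact ⟨b, hbe, D.mem_Kset_of_mem_endmap hab.symm hyba⟩

theorem mem_Kset_or_mem_endmap_of_adj_of_notMem_atomSet_half (huw : H.Adj u w)
    (hxy : G.Adj x y) (hx : x ∈ D.atomSet (.half u w)) (hy : y ∉ D.atomSet (.half u w)) :
    y ∈ Kset H D u ∨ y ∈ D.endmap w u := by
  rcases D.mem_atomSet_half_iff.1 hx with hxu | ⟨hxe, hxw⟩
  · exact Or.inl (D.mem_Kset_of_adj_of_mem_vmap hxy hxu)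
  · rcases D.adj_cases_of_mem_emap huw hxy hxe with hye | ⟨v, v', heq, hxv, hyv⟩ | ⟨T, -, -, -, hxT⟩
    · rw [mem_atomSet_half_iff] at hy
      tauto
    · rcases Sym2.eq_iff.1 heq with ⟨rfl, rfl⟩ | ⟨rfl, rfl⟩
      · exact Or.inl hyv
      · exact (hxw hxv).elim
    · exact (hxw (hxT w u Sym2.eq_swap)).elim

theorem exists_endmap_inter_nonempty_of_Kset_inter_nonempty (hS : (G.induce S).Preconnected)
    (he : e ∈ H.edgeSet) (hSe : (S ∩ D.emap e).Nonempty) (hSK : (S ∩ Kset H D u).Nonempty) :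
    ∃ w, H.Adj u w ∧ (S ∩ D.endmap u w).Nonempty := by
  obtain ⟨y, ⟨hyS, hyK⟩, hyu⟩ : ∃ y ∈ S ∩ Kset H D u, y ∉ D.vmap u := by
    by_cases hSu : (S ∩ D.vmap u).Nonempty
    · obtain ⟨z, hzS, hze⟩ := hSe
      obtain ⟨x, ⟨-, hxu⟩, y, ⟨hyS, hyu⟩, hxy⟩ :=
        exists_adj_mem_notMem_of_preconnected_induce hS hSu
          ⟨z, hzS, (D.disj_ve u e he).notMem_of_mem_right hze⟩
      exact ⟨y, ⟨hyS, D.mem_Kset_of_adj_of_mem_vmap hxy hxu⟩, hyu⟩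
    · obtain ⟨y, hyS, hyK⟩ := hSK
      exact ⟨y, ⟨hyS, hyK⟩, fun hyu => hSu ⟨y, hyS, hyu⟩⟩
  obtain ⟨w, huw, hyw⟩ := (D.mem_Kset_iff.1 hyK).resolve_left hyu
  exact ⟨w, huw, y, hyS, hyw⟩

theorem eq_of_nonAdj_of_endmap_inter_nonempty (hSS' : NonAdj G S S') (hv : H.Adj u v)
    (hw : H.Adj u w) (hSv : (S ∩ D.endmap u v).Nonempty) (hSw : (S' ∩ D.endmap u w).Nonempty) :
    v = w := by
  by_contra hne
  obtain ⟨x, hxS, hxv⟩ := hSv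
  obtain ⟨y, hyS, hyw⟩ := hSw
  exact hSS' x hxS y hyS (D.fully_adj u v w hv hw hne x hxv y hyw)

theorem exists_other_endmap_inter_nonempty (hS : (G.induce S).Preconnected) (he : e ∈ H.edgeSet)
    (he' : e' ∈ H.edgeSet) (hzS : z ∈ S) (hze' : z ∈ D.emap e') (hze : z ∉ D.emap e)
    (hSe : (S ∩ D.emap e).Nonempty) :
    ∃ v ∈ e, ∃ w, H.Adj v w ∧ s(v, w) ≠ e ∧ (S ∩ D.endmap v w).Nonempty := by
  obtain ⟨x, ⟨-, hx⟩, y, ⟨hyS, hy⟩, hxy⟩ :=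
    exists_adj_mem_notMem_of_preconnected_induce (X := D.atomSet (.full e)) hS
      (hSe.mono (Set.inter_subset_inter_right S fun _ h =>
        D.mem_atomSet_full_iff.2 (Or.inr (Or.inl h))))
      ⟨z, hzS, D.notMem_atomSet_full_of_mem_emap he' hze' hze⟩
  obtain ⟨v, hve, hyK⟩ := D.exists_mem_Kset_of_adj_of_notMem_atomSet_full he hxy hx hy
  rw [mem_atomSet_full_iff, not_or, not_or] at hy
  obtain ⟨hyvert, hye, -⟩ := hy
  obtain ⟨w, hvw, hyw⟩ := (D.mem_Kset_iff.1 hyK).resolve_left fun hyv => hyvert ⟨v, hve, hyv⟩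
  refine ⟨v, hve, w, hvw, ?_, y, hyS, hyw⟩
  rintro rfl
  exact hye (D.endmap_subset v w hvw hyw)

theorem opposite_endmap_inter_nonempty_of_notMem_emap (hS : (G.induce S).Preconnected)
    (huw : H.Adj u w) (he : e ∈ H.edgeSet) (hzS : z ∈ S) (hze : z ∈ D.emap e)
    (hzuw : z ∉ D.emap s(u, w)) (hSuw : (S ∩ D.endmap u w).Nonempty)
    (honly : ∀ b, H.Adj u b → (S ∩ D.endmap u b).Nonempty → b = w) :
    (S ∩ D.endmap w u).Nonempty := by
  obtain ⟨a, haS, hauw⟩ := hSuw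
  by_cases hawu : a ∈ D.endmap w u
  · exact ⟨a, haS, hawu⟩
  obtain ⟨x, ⟨-, hx⟩, y, ⟨hyS, hy⟩, hxy⟩ :=
    exists_adj_mem_notMem_of_preconnected_induce (X := D.atomSet (.half u w)) hS
      ⟨a, haS, Or.inr ⟨D.endmap_subset u w huw hauw, hawu⟩⟩
      ⟨z, hzS, fun hz => D.notMem_atomSet_full_of_mem_emap he hze hzuw
        (D.atomSet_half_subset_atomSet_full hz)⟩
  refine ⟨y, hyS, ?_⟩
  rcases D.mem_Kset_or_mem_endmap_of_adj_of_notMem_atomSet_half huw hxy hx hy with hyK | hywu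
  · rw [mem_atomSet_half_iff, not_or, not_and_not_right] at hy
    obtain ⟨b, hub, hyb⟩ := (D.mem_Kset_iff.1 hyK).resolve_left hy.1
    obtain rfl := honly b hub ⟨y, hyS, hyb⟩
    exact hy.2 (D.endmap_subset u b hub hyb)
  · exact hywu

/-- The vertex `z` is the only vertex of one of the two ends of some strip, that is,
`η(ab, a) = {z}` for an edge `ab` of `H`. Peripheral vertices are those for which `a` can be chosen
of degree one. -/
def IsStripTip (z : V) : Prop := ∃ a b, H.Adj a b ∧ D.endmap a b = {z}

variable {D}

theorem IsStripTip.exists_mem_emap (hz : D.IsStripTip z) : ∃ e ∈ H.edgeSet, z ∈ D.emap e := by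
  obtain ⟨a, b, hab, hend⟩ := hz
  exact ⟨s(a, b), hab, D.endmap_subset a b hab (hend ▸ Set.mem_singleton z)⟩

theorem IsStripTip.endmap_eq_or_endmap_eq (hz : D.IsStripTip z) (huw : H.Adj u w)
    (hzuw : z ∈ D.emap s(u, w)) : D.endmap u w = {z} ∨ D.endmap w u = {z} := by
  obtain ⟨a, b, hab, hend⟩ := hz
  have hzab : z ∈ D.emap s(a, b) := D.endmap_subset a b hab (hend ▸ Set.mem_singleton z)
  rcases Sym2.eq_iff.1 (D.eq_of_mem_emap hab huw hzab hzuw) with ⟨rfl, rfl⟩ | ⟨rfl, rfl⟩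
  exacts [Or.inl hend, Or.inr hend]

theorem IsStripTip.opposite_endmap_inter_nonempty (hz : D.IsStripTip z) (hzS : z ∈ S)
    (hS : (G.induce S).Preconnected) (huw : H.Adj u w) (hSuw : (S ∩ D.endmap u w).Nonempty)
    (honly : ∀ b, H.Adj u b → (S ∩ D.endmap u b).Nonempty → b = w)
    (hnot : ¬ D.endmap u w ⊆ S) : (S ∩ D.endmap w u).Nonempty := by
  by_cases hzuw : z ∈ D.emap s(u, w)
  · rcases hz.endmap_eq_or_endmap_eq huw hzuw with hend | hend
    · exact (hnot (hend ▸ Set.singleton_subset_iff.2 hzS)).elim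
    · exact ⟨z, hzS, hend ▸ Set.mem_singleton z⟩
  · obtain ⟨e, he, hze⟩ := hz.exists_mem_emap
    exact D.opposite_endmap_inter_nonempty_of_notMem_emap hS huw he hzS hze hzuw hSuw honly

end ESD

theorem Peripheral.isStripTip {D : ESD G H} {z : V} (hz : Peripheral D z) : D.IsStripTip z :=
  let ⟨a, b, hab, _, hend⟩ := hz
  ⟨a, b, hab, hend⟩

theorem exists_isStripTip_mem_range {D : ESD G H} {m : ℕ} {p : Fin (m + 1) → V}
    (hp : Peripheral D (p 0) ∨ Peripheral D (p (Fin.last m))) :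
    ∃ z ∈ Set.range p, D.IsStripTip z :=
  hp.elim (fun h => ⟨_, Set.mem_range_self _, h.isStripTip⟩)
    (fun h => ⟨_, Set.mem_range_self _, h.isStripTip⟩)

theorem NonAdj.symm {S S' : Set V} (h : NonAdj G S S') : NonAdj G S' S :=
  fun x hx y hy hxy => h y hy x hx hxy.symm

theorem stmt14_general {D : ESD G H} {S S' : Set V} (hS : (G.induce S).Preconnected)
    (hS' : (G.induce S').Preconnected) (hdisj : Disjoint S S') (hnonAdj : NonAdj G S S')
    (htip : ∃ z ∈ S, D.IsStripTip z) (htip' : ∃ z ∈ S', D.IsStripTip z) (u : W) :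
    ¬ ((S ∩ Kset H D u).Nonempty ∧ (S' ∩ Kset H D u).Nonempty) := by
  rintro ⟨hSK, hSK'⟩
  obtain ⟨z, hzS, hz⟩ := htip
  obtain ⟨z', hzS', hz'⟩ := htip'
  obtain ⟨e, he, hze⟩ := hz.exists_mem_emap
  obtain ⟨e', he', hze'⟩ := hz'.exists_mem_emap
  obtain ⟨w, huw, hSw⟩ :=
    D.exists_endmap_inter_nonempty_of_Kset_inter_nonempty hS he ⟨z, hzS, hze⟩ hSK
  obtain ⟨w', huw', hSw'⟩ :=
    D.exists_endmap_inter_nonempty_of_Kset_inter_nonempty hS' he' ⟨z', hzS', hze'⟩ hSK'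
  obtain rfl := D.eq_of_nonAdj_of_endmap_inter_nonempty hnonAdj huw huw' hSw hSw'
  have hopp' : (S' ∩ D.endmap w u).Nonempty :=
    hz'.opposite_endmap_inter_nonempty hzS' hS' huw hSw'
      (fun b hub hSb => D.eq_of_nonAdj_of_endmap_inter_nonempty hnonAdj.symm hub huw hSb hSw)
      (fun hsub => hSw.ne_empty (hdisj.mono_right hsub).inter_eq)
  have hnotTip : ∀ {X : Set V}, (S' ∩ X).Nonempty → X ≠ {z} := by
    rintro X hX rfl
    exact hdisj.notMem_of_mem_left hzS (Set.inter_singleton_nonempty.1 hX)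
  by_cases hzuw : z ∈ D.emap s(u, w)
  · exact (hz.endmap_eq_or_endmap_eq huw hzuw).elim (hnotTip hSw') (hnotTip hopp')
  · obtain ⟨v, hv, b, hvb, hne, hSb⟩ := D.exists_other_endmap_inter_nonempty hS huw he hzS hze hzuw
      (hSw.mono (Set.inter_subset_inter_right S (D.endmap_subset u w huw)))
    rcases Sym2.mem_iff.1 hv with rfl | rfl
    · exact hne (D.eq_of_nonAdj_of_endmap_inter_nonempty hnonAdj hvb huw hSb hSw' ▸ rfl)
    · exact hne (D.eq_of_nonAdj_of_endmap_inter_nonempty hnonAdj hvb huw.symm hSb hopp' ▸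
        Sym2.eq_swap)

end

/-- if `P₁, P₂, P₃` are pairwise vertex-disjoint, pairwise non-adjacent
induced paths in `G`, each having a peripheral endpoint in the extended strip
decomposition `(H, η)` of `G`, then for every vertex `u` of `H` at most one of the three
paths intersects the set `η(u) ∪ ⋃_{w : uw ∈ E(H)} η(uw, u)`. -/
theorem stmt14 {V W : Type} (G : SimpleGraph V) (H : SimpleGraph W) (D : ESD G H)
    (m₁ m₂ m₃ : ℕ) (p₁ : Fin (m₁ + 1) → V) (p₂ : Fin (m₂ + 1) → V) (p₃ : Fin (m₃ + 1) → V)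
    (h₁ : InducedPathFun G p₁) (h₂ : InducedPathFun G p₂) (h₃ : InducedPathFun G p₃)
    (hd₁₂ : Disjoint (Set.range p₁) (Set.range p₂))
    (hd₁₃ : Disjoint (Set.range p₁) (Set.range p₃))
    (hd₂₃ : Disjoint (Set.range p₂) (Set.range p₃))
    (ha₁₂ : NonAdj G (Set.range p₁) (Set.range p₂))
    (ha₁₃ : NonAdj G (Set.range p₁) (Set.range p₃))
    (ha₂₃ : NonAdj G (Set.range p₂) (Set.range p₃))
    (hp₁ : Peripheral D (p₁ 0) ∨ Peripheral D (p₁ (Fin.last m₁)))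
    (hp₂ : Peripheral D (p₂ 0) ∨ Peripheral D (p₂ (Fin.last m₂)))
    (hp₃ : Peripheral D (p₃ 0) ∨ Peripheral D (p₃ (Fin.last m₃))) :
    ∀ u : W,
      ¬ ((Set.range p₁ ∩ Kset H D u).Nonempty ∧ (Set.range p₂ ∩ Kset H D u).Nonempty) ∧
      ¬ ((Set.range p₁ ∩ Kset H D u).Nonempty ∧ (Set.range p₃ ∩ Kset H D u).Nonempty) ∧
      ¬ ((Set.range p₂ ∩ Kset H D u).Nonempty ∧ (Set.range p₃ ∩ Kset H D u).Nonempty) :=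
  fun u => ⟨
    stmt14_general h₁.preconnected_induce_range h₂.preconnected_induce_range hd₁₂ ha₁₂
      (exists_isStripTip_mem_range hp₁) (exists_isStripTip_mem_range hp₂) u,
    stmt14_general h₁.preconnected_induce_range h₃.preconnected_induce_range hd₁₃ ha₁₃
      (exists_isStripTip_mem_range hp₁) (exists_isStripTip_mem_range hp₃) u,
    stmt14_general h₂.preconnected_induce_range h₃.preconnected_induce_range hd₂₃ ha₂₃
      (exists_isStripTip_mem_range hp₂) (exists_isStripTip_mem_range hp₃) u⟩

end Paper
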